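/- arXiv:2307.05053 — 2 statements merged into one kernel-verified Lean document; each statement's English description precedes it below -/
import Mathlib

section
/- The theory V ∪ K ∪ KK is closed generic. -/
/-!
The instances of V and K hold in `canonModel T' S` because entailment contains the valid formulas
and is closed under modus ponens. For KK one needs: if a closed `T' ⊇ V ∪ K` entails `φ`, then it
entails `K φ`. Fix a model `M` of `T'`. The formulas `ψ` with `M ⊨ K ψ` include `T'` (by
closedness) and every valid formula (by V), and are closed under modus ponens (by K), so their truth
sets generate a filter `knownFilter` on the type of models, whose members of the form `{N | N ⊨ φ}`
are exactly those with `M ⊨ K φ`. A set belongs to a filter as soon as it belongs to every finer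
ultrafilter `U`; and the limit model of `U` satisfies exactly the formulas true `U`-almost
everywhere (`sat_ultraModel`), hence satisfies `T'` and therefore `φ`. The ultrafilter takes the
place of propositional compactness.
-/

/-- Formulas of propositional modal logic over atoms `A`. -/
inductive Formula (A : Type) : Type
  | atom : A → Formula A
  | neg : Formula A → Formula A
  | and : Formula A → Formula A → Formula A
  | or : Formula A → Formula A → Formula A
  | imp : Formula A → Formula A → Formula A
  | K : Formula A → Formula A

/-- A model assigns a truth value to each basic formula, i.e. to each
atom and to each formula of the form `K φ`. -/
structure Model (A : Type) where
  atomVal : A → Prop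
  kVal : Formula A → Prop

/-- Truth of a formula in a model. -/
def Model.Sat {A : Type} (M : Model A) : Formula A → Prop
  | .atom a => M.atomVal a
  | .neg φ => ¬ M.Sat φ
  | .and φ ψ => M.Sat φ ∧ M.Sat ψ
  | .or φ ψ => M.Sat φ ∨ M.Sat ψ
  | .imp φ ψ => M.Sat φ → M.Sat ψ
  | .K φ => M.kVal φ

/-- A model satisfies a theory if it satisfies each of its members. -/
def Model.SatTheory {A : Type} (M : Model A) (T : Set (Formula A)) : Prop :=
  ∀ φ ∈ T, M.Sat φ

/-- `T` entails `φ`: every model of `T` satisfies `φ`. -/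
def Entails {A : Type} (T : Set (Formula A)) (φ : Formula A) : Prop :=
  ∀ M : Model A, M.SatTheory T → M.Sat φ

/-- `φ` is valid iff it is entailed by the empty theory. -/
def Valid {A : Type} (φ : Formula A) : Prop := Entails ∅ φ

/-- A theory is closed if it contains `K φ` whenever it contains `φ`. -/
def TheoryClosed {A : Type} (T : Set (Formula A)) : Prop :=
  ∀ φ ∈ T, Formula.K φ ∈ T

/-- A theory is consistent iff some model satisfies it. -/
def Consistent {A : Type} (T : Set (Formula A)) : Prop :=
  ∃ M : Model A, M.SatTheory T

/-- The schema V: `K φ` for every valid `φ`. -/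
def schemaV (A : Type) : Set (Formula A) :=
  { χ | ∃ φ, Valid φ ∧ χ = Formula.K φ }

/-- The schema K: all formulas `K(φ→ψ) → (Kφ → Kψ)`. -/
def schemaK (A : Type) : Set (Formula A) :=
  { χ | ∃ φ ψ, χ = Formula.imp (Formula.K (Formula.imp φ ψ))
      (Formula.imp (Formula.K φ) (Formula.K ψ)) }

/-- The schema T: all formulas `Kφ → φ`. -/
def schemaT (A : Type) : Set (Formula A) :=
  { χ | ∃ φ, χ = Formula.imp (Formula.K φ) φ }

/-- The schema KK (a.k.a. 4): all formulas `Kφ → KKφ`. -/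
def schemaKK (A : Type) : Set (Formula A) :=
  { χ | ∃ φ, χ = Formula.imp (Formula.K φ) (Formula.K (Formula.K φ)) }

/-- `φ ↔ ψ` abbreviates `(φ→ψ) ∧ (ψ→φ)`. -/
def Formula.iffF {A : Type} (φ ψ : Formula A) : Formula A :=
  Formula.and (Formula.imp φ ψ) (Formula.imp ψ φ)

/-- The model `M_{T,S}`: atoms are true iff in `S`; `Kφ` true iff `T ⊨ φ`. -/
def canonModel {A : Type} (T : Set (Formula A)) (S : Set A) : Model A :=
  { atomVal := fun a => a ∈ S, kVal := fun φ => Entails T φ }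

/-- `T` is generic iff for every set `S` of atoms and every theory `T' ⊇ T`,
`M_{T',S} ⊨ T`. -/
def Generic {A : Type} (T : Set (Formula A)) : Prop :=
  ∀ (S : Set A) (T' : Set (Formula A)), T ⊆ T' → (canonModel T' S).SatTheory T

/-- `T` is closed generic iff for every set `S` of atoms and every closed
theory `T' ⊇ T`, `M_{T',S} ⊨ T`. -/
def ClosedGeneric {A : Type} (T : Set (Formula A)) : Prop :=
  ∀ (S : Set A) (T' : Set (Formula A)), TheoryClosed T' → T ⊆ T' →
    (canonModel T' S).SatTheory T

/-- The smallest closed theory containing `X`: the intersection of all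
closed theories containing `X`. -/
def closedClosure {A : Type} (X : Set (Formula A)) : Set (Formula A) :=
  ⋂₀ { T | TheoryClosed T ∧ X ⊆ T }

/-- The limit of the models along an ultrafilter: a basic formula is true iff it is true in
`U`-almost every model. -/
def ultraModel {A : Type} (U : Ultrafilter (Model A)) : Model A where
  atomVal a := ∀ᶠ N in (U : Filter (Model A)), N.atomVal a
  kVal φ := ∀ᶠ N in (U : Filter (Model A)), N.kVal φ

/-- Łoś's theorem for propositional models. -/
theorem sat_ultraModel {A : Type} (U : Ultrafilter (Model A)) (φ : Formula A) :
    (ultraModel U).Sat φ ↔ ∀ᶠ N in (U : Filter (Model A)), N.Sat φ := by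
  induction φ with
  | atom a => exact Iff.rfl
  | K φ => exact Iff.rfl
  | neg φ ih => simp only [Model.Sat, ih, Ultrafilter.eventually_not]
  | and φ ψ ih₁ ih₂ => simp only [Model.Sat, ih₁, ih₂, Filter.eventually_and]
  | or φ ψ ih₁ ih₂ => simp only [Model.Sat, ih₁, ih₂, Ultrafilter.eventually_or]
  | imp φ ψ ih₁ ih₂ => simp only [Model.Sat, ih₁, ih₂, Ultrafilter.eventually_imp]

/-- The filter on models generated by the truth sets of the formulas known in `M`, where knowledge
in `M` contains the valid formulas and is closed under modus ponens. -/
def knownFilter {A : Type} [Nonempty A] (M : Model A) (hV : ∀ φ, Valid φ → M.kVal φ)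
    (hK : ∀ φ ψ, M.kVal (.imp φ ψ) → M.kVal φ → M.kVal ψ) : Filter (Model A) where
  sets := {s | ∃ ψ, M.kVal ψ ∧ ∀ N : Model A, N.Sat ψ → N ∈ s}
  univ_sets :=
    let a := Classical.arbitrary A
    ⟨.imp (.atom a) (.atom a), hV _ fun _ _ h => h, fun _ _ => trivial⟩
  sets_of_superset := by
    rintro s t ⟨ψ, hψ, hs⟩ hst
    exact ⟨ψ, hψ, fun N hN => hst (hs N hN)⟩
  inter_sets := by
    rintro s t ⟨ψ, hψ, hs⟩ ⟨χ, hχ, ht⟩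
    have hval : Valid (.imp ψ (.imp χ (.and ψ χ))) := fun _ _ h₁ h₂ => ⟨h₁, h₂⟩
    exact ⟨.and ψ χ, hK _ _ (hK _ _ (hV _ hval) hψ) hχ, fun N hN => ⟨hs N hN.1, ht N hN.2⟩⟩

/-- Closed theories extending V and K are closed under necessitation of their consequences. -/
theorem entails_K_of_entails {A : Type} [Nonempty A] {T : Set (Formula A)} (hT : TheoryClosed T)
    (hV : schemaV A ⊆ T) (hK : schemaK A ⊆ T) {φ : Formula A} (h : Entails T φ) :
    Entails T (.K φ) := by
  intro M hM
  have hV' : ∀ ψ, Valid ψ → M.kVal ψ := fun ψ hψ => hM _ (hV ⟨ψ, hψ, rfl⟩)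
  have hK' : ∀ ψ χ, M.kVal (.imp ψ χ) → M.kVal ψ → M.kVal χ :=
    fun ψ χ => hM _ (hK ⟨ψ, χ, rfl⟩)
  have key : {N : Model A | N.Sat φ} ∈ knownFilter M hV' hK' := by
    rw [Filter.mem_iff_ultrafilter]
    intro U hU
    refine (sat_ultraModel U φ).1 (h _ fun ψ hψ => (sat_ultraModel U ψ).2 (hU ?_))
    exact ⟨ψ, hM _ (hT ψ hψ), fun _ hN => hN⟩
  obtain ⟨ψ, hψ, hs⟩ := key
  exact hK' ψ φ (hV' _ fun N _ => hs N) hψ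

/-- the theory V ∪ K ∪ KK is closed generic. -/
theorem statement9 (A : Type) [Nonempty A] :
    ClosedGeneric (schemaV A ∪ schemaK A ∪ schemaKK A) := by
  rintro S T hT hsub χ ((⟨φ, hφ, rfl⟩ | ⟨φ, ψ, rfl⟩) | ⟨φ, rfl⟩)
  · exact fun M _ => hφ M fun _ h => h.elim
  · exact fun h₁ h₂ M hM => h₁ M hM (h₂ M hM)
  · exact fun h => entails_K_of_entails hT (fun _ hx => hsub (.inl (.inl hx)))
      (fun _ hx => hsub (.inl (.inr hx))) h
end

section
/- Let p be a propositional atom and let H be a generic theory. Let (T_KP)₀ be the smallest closed theory containing H and the formula p ↔ K¬p, and let T_KP be the union of (T_KP)₀ with the schema T. Then for every set S of propositional atoms with p ∉ S, the model M_{(T_KP)₀,S} satisfies T_KP; in particular, T_KP is consistent. -/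
theorem subset_closedClosure {A : Type} (X : Set (Formula A)) : X ⊆ closedClosure X :=
  fun _ hφ _ hT => hT.2 hφ

theorem closedClosure_closed {A : Type} (X : Set (Formula A)) : TheoryClosed (closedClosure X) :=
  fun φ hφ T hT => hT.1 φ (hφ T hT)

/-- A canonical model over a theory extending the closure of `X` satisfies the whole closure once it
satisfies `X`: the formulas `Kφ` added by the closure are true because `φ` is entailed. -/
theorem canonModel_satTheory_closedClosure {A : Type} {X T' : Set (Formula A)} {S : Set A}
    (hT' : closedClosure X ⊆ T') (hX : (canonModel T' S).SatTheory X) :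
    (canonModel T' S).SatTheory (closedClosure X) := by
  intro φ hφ
  -- The members of the closure that are true in the model form a closed theory containing `X`.
  have h := hφ {ψ | ψ ∈ closedClosure X ∧ (canonModel T' S).Sat ψ}
    ⟨fun ψ hψ => ⟨closedClosure_closed X ψ hψ.1, fun _ hM => hM ψ (hT' hψ.1)⟩,
      fun ψ hψ => ⟨subset_closedClosure X hψ, hX ψ hψ⟩⟩
  exact h.2

theorem not_entails_neg_atom {A : Type} (p : A) {H : Set (Formula A)} (hH : Generic H) :
    ¬ Entails (closedClosure (H ∪
      {Formula.iffF (Formula.atom p) (Formula.K (Formula.neg (Formula.atom p)))}))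
      (Formula.neg (Formula.atom p)) := by
  intro hent
  refine hent (canonModel Set.univ Set.univ)
    (canonModel_satTheory_closedClosure (Set.subset_univ _) ?_) (Set.mem_univ p)
  rintro φ (hφ | rfl)
  · exact hH _ _ (Set.subset_univ _) φ hφ
  · exact ⟨fun _ _ hM => hM _ (Set.mem_univ _), fun _ => Set.mem_univ p⟩

/-- for a generic theory `H`, with `(T_KP)₀` the smallest closed
theory containing `H` and `p ↔ K¬p`, and `T_KP = (T_KP)₀ ∪ schema T`: for every
set `S` of atoms with `p ∉ S`, `M_{(T_KP)₀,S} ⊨ T_KP`; in particular `T_KP`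
is consistent. -/
theorem statement13 (A : Type) [Nonempty A] (p : A) (H : Set (Formula A))
    (hH : Generic H) :
    (∀ S : Set A, p ∉ S →
      (canonModel
        (closedClosure (H ∪
          {Formula.iffF (Formula.atom p) (Formula.K (Formula.neg (Formula.atom p)))}))
        S).SatTheory
        (closedClosure (H ∪
          {Formula.iffF (Formula.atom p) (Formula.K (Formula.neg (Formula.atom p)))})
          ∪ schemaT A)) ∧
    Consistent
      (closedClosure (H ∪
        {Formula.iffF (Formula.atom p) (Formula.K (Formula.neg (Formula.atom p)))})
        ∪ schemaT A) := by
  have key : ∀ S : Set A, p ∉ S →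
      (canonModel
        (closedClosure (H ∪
          {Formula.iffF (Formula.atom p) (Formula.K (Formula.neg (Formula.atom p)))}))
        S).SatTheory
        (closedClosure (H ∪
          {Formula.iffF (Formula.atom p) (Formula.K (Formula.neg (Formula.atom p)))})
          ∪ schemaT A) := by
    intro S hpS
    have h0 := canonModel_satTheory_closedClosure (S := S) (X := H ∪
      {Formula.iffF (Formula.atom p) (Formula.K (Formula.neg (Formula.atom p)))})
      Set.Subset.rfl (by
        rintro φ (hφ | rfl)
        · exact hH _ _ (Set.subset_union_left.trans (subset_closedClosure _)) φ hφ
        · exact ⟨fun h => absurd h hpS, fun h => absurd h (not_entails_neg_atom p hH)⟩)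
    rintro φ (hφ | ⟨ψ, rfl⟩)
    · exact h0 φ hφ
    · exact fun hψ => hψ _ h0
  exact ⟨key, _, key ∅ (Set.notMem_empty p)⟩
end
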